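/- Let J be a Jordan algebra over a field K of characteristic zero. If J admits a bijective derivation D (a linear bijection with D(xy) = D(x)y + xD(y) for all x, y ∈ J), then J is nilpotent, i.e., there exists n ≥ 1 such that J⁽ⁿ⁾ = {0}, where J⁽¹⁾ = J and J⁽ᵏ⁾ is the linear span of all products J⁽ⁱ⁾·J⁽ʲ⁾ with i + j = k. -/

import Mathlib

variable (K : Type*) [Field K] [CharZero K]
variable (J : Type*) [NonUnitalNonAssocCommRing J] [Module K J]
  [SMulCommClass K J J] [IsScalarTower K J J] [FiniteDimensional K J]

/-- The series `J⁽ᵏ⁾` (shifted by one): `nser K J n = J⁽ⁿ⁺¹⁾`, where `J⁽¹⁾ = J` and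
`J⁽ᵏ⁾ = span {J⁽ⁱ⁾ · J⁽ʲ⁾ : i + j = k}`. -/
def nser : ℕ → Submodule K J
  | 0 => ⊤
  | n + 1 =>
      ⨆ p : Fin (n + 1),
        Submodule.span K
          {z : J | ∃ x ∈ nser p.1, ∃ y ∈ nser (n - p.1), z = x * y}
  termination_by n => n
  decreasing_by
  · exact p.isLt
  · omega

section TraceOfPowers

open Polynomial

/-- In characteristic zero, an endomorphism all of whose positive powers have trace zero is
nilpotent. -/
theorem isNilpotent_of_trace_pow_eq_zero {F V : Type*} [Field F] [CharZero F] [AddCommGroup V]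
    [Module F V] [FiniteDimensional F V] (f : Module.End F V)
    (h : ∀ n : ℕ, LinearMap.trace F V (f ^ (n + 1)) = 0) : IsNilpotent f := by
  have hmin : minpoly F f ≠ 0 := minpoly.ne_zero (Algebra.IsIntegral.isIntegral f)
  obtain ⟨q, hq, hdvd⟩ :=
    Polynomial.exists_eq_pow_rootMultiplicity_mul_and_not_dvd _ hmin 0
  rw [C_0, sub_zero] at hq hdvd
  set m := (minpoly F f).rootMultiplicity 0
  have hcop : IsCoprime (X ^ (m + 1) : F[X]) q :=
    ((irreducible_X.coprime_iff_not_dvd).2 hdvd).pow_left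
  obtain ⟨u, v, huv⟩ := hcop
  have hzero : aeval f (X ^ (m + 1) * q) = 0 := by
    rw [pow_succ', mul_assoc, ← hq, map_mul, minpoly.aeval, mul_zero]
  have htrace : ∀ p : F[X], LinearMap.trace F V (aeval f (p * X)) = 0 := by
    intro p
    induction p using Polynomial.induction_on' with
    | add p r hp hr => rw [add_mul, map_add, map_add, hp, hr, add_zero]
    | monomial n a =>
      rw [monomial_mul_X, aeval_monomial, ← Algebra.smul_def, map_smul, h, smul_zero]
  set e : Module.End F V := aeval f (u * X ^ (m + 1)) with he
  have hidem : IsIdempotentElem e := by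
    have : u * X ^ (m + 1) * (u * X ^ (m + 1)) =
        u * X ^ (m + 1) - u * v * (X ^ (m + 1) * q) := by
      linear_combination (u * X ^ (m + 1)) * huv
    rw [IsIdempotentElem, he, ← map_mul, this, map_sub, map_mul _ (u * v), hzero, mul_zero,
      sub_zero]
  have he0 : e = 0 := LinearMap.IsIdempotentElem.eq_zero_of_trace_eq_zero hidem <| by
    rw [he, pow_succ, ← mul_assoc]
    exact htrace _
  refine ⟨m + 1, ?_⟩
  have : (X ^ (m + 1) : F[X]) = X ^ (m + 1) * (u * X ^ (m + 1)) + v * (X ^ (m + 1) * q) := by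
    linear_combination (-X ^ (m + 1)) * huv
  rw [← aeval_X_pow (R := F) f, this, map_add, map_mul, map_mul _ v, hzero, ← he, he0, mul_zero, mul_zero,
    add_zero]

end TraceOfPowers

section LieModule

open LieAlgebra LieModule

/-- A finite-dimensional module with zero trace form over a Lie algebra `L` is nilpotent as soon as
every element of `L` acts nilpotently up to an element of `⁅L, L⁆`. -/
theorem isNilpotent_of_traceForm_eq_zero {F L M : Type*} [Field F] [CharZero F] [LieRing L]
    [LieAlgebra F L] [AddCommGroup M] [Module F M] [FiniteDimensional F M] [LieRingModule L M]
    [LieModule F L M] (h : traceForm F L M = 0)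
    (hnil : ∀ x : L, ∃ d ∈ derivedSeries F L 1, IsNilpotent (toEnd F L M (x - d))) :
    LieModule.IsNilpotent L M := by
  have hder := isNilpotent_derivedSeries_of_traceForm_eq_zero h
  rw [LieModule.isNilpotent_iff F] at hder
  obtain ⟨k, hk⟩ := hder
  set I := derivedSeries F L 1
  have hbot : ∀ v ∈ I.lcs M k, v = 0 := by
    intro v hv
    have : v ∈ (I.lcs M k).toSubmodule := hv
    rwa [I.coe_lcs_eq, hk] at this
  rw [LieModule.isNilpotent_iff_forall' (R := F)]
  intro x
  obtain ⟨d, hd, m, hm⟩ := hnil x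
  have hdiff : ∀ j n, ∀ v ∈ I.lcs M j,
      (toEnd F L M x ^ n) v - (toEnd F L M (x - d) ^ n) v ∈ I.lcs M (j + 1) := by
    intro j n v hv
    induction n with
    | zero => simp
    | succ n ih =>
      have hpow : (toEnd F L M (x - d) ^ n) v ∈ I.lcs M j := by
        clear ih
        induction n with
        | zero => simpa
        | succ n ih =>
          rw [pow_succ']
          exact (I.lcs M j).lie_mem ih
      have hsplit : (toEnd F L M x ^ (n + 1)) v - (toEnd F L M (x - d) ^ (n + 1)) v =
          ⁅x, (toEnd F L M x ^ n) v - (toEnd F L M (x - d) ^ n) v⁆ +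
            ⁅d, (toEnd F L M (x - d) ^ n) v⁆ := by
        simp only [pow_succ', Module.End.mul_apply, toEnd_apply_apply, lie_sub, sub_lie]
        abel
      rw [hsplit]
      refine add_mem ((I.lcs M (j + 1)).lie_mem ih) ?_
      rw [LieIdeal.lcs_succ]
      exact LieSubmodule.lie_mem_lie hd hpow
  have hmem : ∀ j v, ((toEnd F L M x ^ m) ^ j) v ∈ I.lcs M j := by
    intro j
    induction j with
    | zero => simp
    | succ j ih =>
      intro v
      have := hdiff j m _ (ih v)
      rwa [hm, LinearMap.zero_apply, sub_zero, ← Module.End.mul_apply, ← pow_succ'] at this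
  refine ⟨m * k, LinearMap.ext fun v => ?_⟩
  rw [pow_mul]
  exact hbot _ (hmem k v)

end LieModule

section Doubling

variable {F V : Type*} [Field F] [AddCommGroup V] [Module F V]

/-- The endomorphism `(u, v) ↦ (d u, d v)` of `V × V`. -/
def blockDiag (d : Module.End F V) : Module.End F (V × V) := d.prodMap d

/-- The endomorphism `(u, v) ↦ (a v, a u)` of `V × V`. -/
def blockAnti (a : Module.End F V) : Module.End F (V × V) :=
  (a ∘ₗ LinearMap.snd F V V).prod (a ∘ₗ LinearMap.fst F V V)

/-- The sum of the diagonal blocks of an endomorphism of `V × V`. -/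
def blockTrace (f : Module.End F (V × V)) : Module.End F V :=
  LinearMap.fst F V V ∘ₗ f ∘ₗ LinearMap.inl F V V +
    LinearMap.snd F V V ∘ₗ f ∘ₗ LinearMap.inr F V V

@[simp]
theorem blockDiag_apply (d : Module.End F V) (p : V × V) : blockDiag d p = (d p.1, d p.2) := rfl

@[simp]
theorem blockAnti_apply (a : Module.End F V) (p : V × V) : blockAnti a p = (a p.2, a p.1) := rfl

@[simp]
theorem blockTrace_apply (f : Module.End F (V × V)) (v : V) :
    blockTrace f v = (f (v, 0)).1 + (f (0, v)).2 := rfl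

theorem trace_blockTrace [FiniteDimensional F V] (f : Module.End F (V × V)) :
    LinearMap.trace F V (blockTrace f) = LinearMap.trace F (V × V) f := by
  have hf : f = LinearMap.inl F V V ∘ₗ (LinearMap.fst F V V ∘ₗ f) +
      LinearMap.inr F V V ∘ₗ (LinearMap.snd F V V ∘ₗ f) := by
    ext p <;> simp
  conv_rhs => rw [hf]
  rw [map_add, LinearMap.trace_comp_comm', LinearMap.trace_comp_comm' _ (LinearMap.inr F V V),
    blockTrace, map_add]
  rfl

theorem trace_blockDiag [FiniteDimensional F V] (d : Module.End F V) :
    LinearMap.trace F (V × V) (blockDiag d) = 2 * LinearMap.trace F V d := by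
  have : blockTrace (blockDiag d) = d + d := by ext; simp
  rw [← trace_blockTrace, this, map_add, two_mul]

theorem trace_blockAnti [FiniteDimensional F V] (a : Module.End F V) :
    LinearMap.trace F (V × V) (blockAnti a) = 0 := by
  have : blockTrace (blockAnti a) = 0 := by ext; simp
  rw [← trace_blockTrace, this, map_zero]

theorem blockDiag_mul_blockDiag (c d : Module.End F V) :
    blockDiag c * blockDiag d = blockDiag (c * d) := rfl

theorem blockDiag_mul_blockAnti (c d : Module.End F V) :
    blockDiag c * blockAnti d = blockAnti (c * d) := rfl

theorem blockAnti_mul_blockDiag (c d : Module.End F V) :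
    blockAnti c * blockDiag d = blockAnti (c * d) := rfl

theorem blockAnti_mul_blockAnti (c d : Module.End F V) :
    blockAnti c * blockAnti d = blockDiag (c * d) := rfl

theorem blockDiag_pow (d : Module.End F V) (n : ℕ) : blockDiag d ^ n = blockDiag (d ^ n) := by
  induction n with
  | zero => rfl
  | succ n ih => rw [pow_succ, ih, blockDiag_mul_blockDiag, pow_succ]

theorem IsNilpotent.blockAnti {a : Module.End F V} (ha : IsNilpotent a) :
    IsNilpotent (blockAnti a) := by
  obtain ⟨n, hn⟩ := ha
  refine ⟨2 * n, ?_⟩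
  rw [pow_mul, pow_two, blockAnti_mul_blockAnti, blockDiag_pow, ← pow_two, ← pow_mul, mul_comm,
    pow_mul, hn, zero_pow two_ne_zero]
  rfl

/-- If `f` is a root of `X² - 2aX - b` on `V × V` with block trace `2a`, and the power sums `2 s n`
of the roots of this polynomial all have trace zero, then `f` is nilpotent. -/
theorem isNilpotent_of_powerSums_trace_eq_zero [CharZero F] [FiniteDimensional F V]
    {a b : Module.End F V} {s : ℕ → Module.End F V} (hs0 : s 0 = 1) (hs1 : s 1 = a)
    (hs : ∀ n, s (n + 2) = 2 * a * s (n + 1) + b * s n)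
    (htr : ∀ n, LinearMap.trace F V (s (n + 1)) = 0) (f : Module.End F (V × V))
    (hf : f * f = blockDiag (2 * a) * f + blockDiag b) (hf1 : blockTrace f = 2 * a) :
    IsNilpotent f := by
  have hadd : ∀ g h : Module.End F (V × V), blockTrace (g + h) = blockTrace g + blockTrace h := by
    intro g h
    ext
    simp only [blockTrace_apply, LinearMap.add_apply, Prod.fst_add, Prod.snd_add]
    abel
  have hmul : ∀ (d : Module.End F V) (g : Module.End F (V × V)),
      blockTrace (blockDiag d * g) = d * blockTrace g := by
    intro d g
    ext
    simp
  have key : ∀ n, blockTrace (f ^ n) = 2 * s n ∧ blockTrace (f ^ (n + 1)) = 2 * s (n + 1) := by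
    intro n
    induction n with
    | zero =>
      refine ⟨?_, by rw [zero_add, pow_one, hf1, hs1]⟩
      rw [hs0, mul_one]
      ext v
      simp [← one_add_one_eq_two]
    | succ n ih =>
      refine ⟨ih.2, ?_⟩
      have hpow : f ^ (n + 1 + 1) = blockDiag (2 * a) * f ^ (n + 1) + blockDiag b * f ^ n := by
        rw [pow_succ', pow_succ', ← mul_assoc, hf, add_mul, mul_assoc]
      have h2 : ∀ c : Module.End F V, c * 2 = 2 * c := fun c => by rw [mul_two, two_mul]
      rw [hpow, hadd, hmul, hmul, ih.1, ih.2, hs, mul_add, ← mul_assoc b, h2, mul_assoc 2 b,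
        ← mul_assoc (2 * a), h2 (2 * a), mul_assoc 2 (2 * a)]
  refine isNilpotent_of_trace_pow_eq_zero f fun n => ?_
  rw [← trace_blockTrace, (key n).2, two_mul, map_add, htr, add_zero]

/-- If the power sums of the roots of `X² - 2aX - b` all have trace zero, then `a` is nilpotent. -/
theorem isNilpotent_of_powerSums [CharZero F] [FiniteDimensional F V]
    {a b : Module.End F V} (hab : Commute a b) {s : ℕ → Module.End F V} (hs0 : s 0 = 1)
    (hs1 : s 1 = a) (hs : ∀ n, s (n + 2) = 2 * a * s (n + 1) + b * s n)
    (htr : ∀ n, LinearMap.trace F V (s (n + 1)) = 0) : IsNilpotent a := by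
  let f : Module.End F (V × V) :=
    ((2 * a) ∘ₗ LinearMap.fst F V V + b ∘ₗ LinearMap.snd F V V).prod (LinearMap.fst F V V)
  have hcomm : ∀ v, a (b v) = b (a v) := fun v => LinearMap.congr_fun hab v
  have two_apply : ∀ v : V, (2 : Module.End F V) v = v + v := fun v => by
    rw [← one_add_one_eq_two]; rfl
  have hfa : f * blockDiag (2 * a) = blockDiag (2 * a) * f := by
    refine LinearMap.ext fun p => ?_
    simp [f, two_apply, hcomm]
    abel
  have hff : f * f = blockDiag (2 * a) * f + blockDiag b := by
    refine LinearMap.ext fun p => ?_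
    simp [f, two_apply]
  have hf : IsNilpotent f := by
    refine isNilpotent_of_powerSums_trace_eq_zero hs0 hs1 hs htr f hff ?_
    ext v
    simp [f]
  have hf' : IsNilpotent (blockDiag (2 * a) - f) := by
    refine isNilpotent_of_powerSums_trace_eq_zero hs0 hs1 hs htr _ ?_ ?_
    · rw [mul_sub, sub_mul, sub_mul, hff, hfa, mul_sub]
      abel
    · ext v
      simp [f]
  have hsum : IsNilpotent (blockDiag (2 * a)) := by
    have hc : Commute f (blockDiag (2 * a) - f) := by
      rw [Commute, SemiconjBy, mul_sub, sub_mul, hfa]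
    simpa using hc.isNilpotent_add hf hf'
  obtain ⟨n, hn⟩ := hsum
  have hn' : (2 * a) ^ n = 0 := by
    rw [blockDiag_pow] at hn
    ext v
    exact congrArg Prod.fst (LinearMap.congr_fun hn (v, 0))
  have h2 : (2 * a : Module.End F V) = (2 : F) • a := by rw [two_mul, two_smul]
  rw [h2, smul_pow] at hn'
  exact ⟨n, (smul_eq_zero.1 hn').resolve_left (pow_ne_zero _ two_ne_zero)⟩

end Doubling

section Jordan

/-- The full linearization of the Jordan identity. -/
theorem jordan_linearized (F : Type*) {A : Type*} [Field F] [CharZero F]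
    [NonUnitalNonAssocCommRing A] [Module F A] [IsCommJordan A] (a b c d : A) :
    a * (b * c * d) + b * (c * a * d) + c * (a * b * d) =
      b * c * (a * d) + c * a * (b * d) + a * b * (c * d) := by
  have h := DFunLike.congr_fun (two_nsmul_lie_lmul_lmul_add_add_eq_zero a b c) d
  have h' : (2 : F) • ((a * (b * c * d) - b * c * (a * d)) + (b * (c * a * d) - c * a * (b * d)) +
      (c * (a * b * d) - a * b * (c * d))) = 0 := by
    rw [two_smul, ← two_nsmul]
    exact h
  have h'' := (smul_eq_zero.1 h').resolve_left two_ne_zero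
  rw [← sub_eq_zero, ← h'']
  abel

variable {F A : Type*} [Field F] [NonUnitalNonAssocCommRing A] [Module F A]
  [SMulCommClass F A A] [IsScalarTower F A A]

/-- The inner derivations of a Jordan algebra: the span of the commutators of multiplications. -/
def innerDerivations (F A : Type*) [Field F] [NonUnitalNonAssocCommRing A] [Module F A]
    [SMulCommClass F A A] [IsScalarTower F A A] : Submodule F (Module.End F A) :=
  Submodule.span F {d | ∃ x y : A, d = LinearMap.mul F A x * LinearMap.mul F A y -
    LinearMap.mul F A y * LinearMap.mul F A x}

theorem commutator_mul_mem_innerDerivations (x y : A) :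
    LinearMap.mul F A x * LinearMap.mul F A y - LinearMap.mul F A y * LinearMap.mul F A x ∈
      innerDerivations F A :=
  Submodule.subset_span ⟨x, y, rfl⟩

theorem commute_mul_mul_self [IsCommJordan A] (x : A) :
    Commute (LinearMap.mul F A x) (LinearMap.mul F A (x * x)) := by
  ext y
  simpa using (IsJordan.lmul_lmul_comm_lmul x y).symm

theorem trace_mul_mul_eq_zero [CharZero F]
    (hnil : ∀ x : A, IsNilpotent (LinearMap.mul F A x)) (x y : A) :
    LinearMap.trace F A (LinearMap.mul F A x * LinearMap.mul F A y) = 0 := by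
  have hsq : ∀ z : A, LinearMap.trace F A (LinearMap.mul F A z * LinearMap.mul F A z) = 0 :=
    fun z => (LinearMap.isNilpotent_trace_of_isNilpotent
      ((Commute.refl (LinearMap.mul F A z)).isNilpotent_mul_right (hnil z))).eq_zero
  have h := hsq (x + y)
  rw [map_add, add_mul, mul_add, mul_add, map_add, map_add, map_add, hsq, hsq,
    LinearMap.trace_mul_comm F (LinearMap.mul F A y)] at h
  have h2 : (2 : F) * LinearMap.trace F A (LinearMap.mul F A x * LinearMap.mul F A y) = 0 := by
    linear_combination h
  exact (mul_eq_zero.1 h2).resolve_left two_ne_zero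

variable [CharZero F] [IsCommJordan A]

theorem mul_mul_mul (a b d : A) :
    LinearMap.mul F A (a * b * d) =
      LinearMap.mul F A (a * d) * LinearMap.mul F A b +
        LinearMap.mul F A (b * d) * LinearMap.mul F A a +
        LinearMap.mul F A (a * b) * LinearMap.mul F A d -
        LinearMap.mul F A a * LinearMap.mul F A d * LinearMap.mul F A b -
        LinearMap.mul F A b * LinearMap.mul F A d * LinearMap.mul F A a := by
  ext c
  have h := jordan_linearized F a b c d
  simp only [LinearMap.mul_apply', LinearMap.sub_apply, LinearMap.add_apply,
    Module.End.mul_apply]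
  rw [mul_comm (b * c) d, mul_comm c a, mul_comm (a * c) d, mul_comm c (a * b * d),
    mul_comm (b * c) (a * d), mul_comm (a * c) (b * d), mul_comm c d] at h
  rw [← sub_eq_zero] at h ⊢
  rw [← h]
  abel

/-- The multiplications by the powers of `x` satisfy a two-term recurrence. -/
theorem mul_iterate_recurrence (x y : A) (h : Commute (LinearMap.mul F A x) (LinearMap.mul F A y))
    (h' : Commute (LinearMap.mul F A x) (LinearMap.mul F A (x * y))) :
    LinearMap.mul F A (x * (x * y)) =
      2 * LinearMap.mul F A x * LinearMap.mul F A (x * y) +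
        (LinearMap.mul F A (x * x) - 2 * (LinearMap.mul F A x * LinearMap.mul F A x)) *
          LinearMap.mul F A y := by
  rw [mul_comm x (x * y), mul_mul_mul, mul_comm y x, mul_assoc 2, h'.eq, sub_mul, mul_assoc 2,
    two_mul, two_mul, mul_assoc (LinearMap.mul F A y), ← (h.mul_left h).eq]
  abel

theorem commute_mul_iterate (x : A) (n : ℕ) :
    Commute (LinearMap.mul F A x) (LinearMap.mul F A ((x * ·)^[n] x)) ∧
      Commute (LinearMap.mul F A x) (LinearMap.mul F A ((x * ·)^[n + 1] x)) := by
  induction n with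
  | zero => exact ⟨Commute.refl _, commute_mul_mul_self x⟩
  | succ n ih =>
    refine ⟨ih.2, ?_⟩
    rw [Function.iterate_succ_apply'] at ih
    rw [Function.iterate_succ_apply', Function.iterate_succ_apply',
      mul_iterate_recurrence x _ ih.1 ih.2]
    have h2 : Commute (LinearMap.mul F A x) 2 := Commute.ofNat_right _ 2
    exact ((h2.mul_right (Commute.refl _)).mul_right ih.2).add_right
      (((commute_mul_mul_self x).sub_right
        (h2.mul_right ((Commute.refl _).mul_right (Commute.refl _)))).mul_right ih.1)

theorem isNilpotent_mul_of_trace_eq_zero [FiniteDimensional F A]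
    (htr : ∀ x : A, LinearMap.trace F A (LinearMap.mul F A x) = 0) (x : A) :
    IsNilpotent (LinearMap.mul F A x) := by
  let s : ℕ → Module.End F A
    | 0 => 1
    | n + 1 => LinearMap.mul F A ((x * ·)^[n] x)
  have h2 : Commute (LinearMap.mul F A x) 2 := Commute.ofNat_right _ 2
  refine isNilpotent_of_powerSums (b := LinearMap.mul F A (x * x) -
    2 * (LinearMap.mul F A x * LinearMap.mul F A x)) (s := s) ?_ rfl rfl ?_ fun n => htr _
  · exact (commute_mul_mul_self x).sub_right
      (h2.mul_right ((Commute.refl _).mul_right (Commute.refl _)))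
  · intro n
    cases n with
    | zero =>
      change LinearMap.mul F A (x * x) = 2 * LinearMap.mul F A x * LinearMap.mul F A x + _ * 1
      rw [mul_one, mul_assoc]
      abel
    | succ n =>
      have h := commute_mul_iterate (F := F) x n
      rw [Function.iterate_succ_apply'] at h
      change LinearMap.mul F A ((x * ·)^[n + 2] x) =
        _ * LinearMap.mul F A ((x * ·)^[n + 1] x) + _ * LinearMap.mul F A ((x * ·)^[n] x)
      rw [Function.iterate_succ_apply', Function.iterate_succ_apply',
        mul_iterate_recurrence x _ h.1 h.2]

theorem innerDerivations_commutator_mul {d : Module.End F A} (hd : d ∈ innerDerivations F A)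
    (z : A) : d * LinearMap.mul F A z - LinearMap.mul F A z * d = LinearMap.mul F A (d z) := by
  induction hd using Submodule.span_induction with
  | mem d hd =>
    obtain ⟨x, y, rfl⟩ := hd
    have h1 := mul_mul_mul (F := F) z y x
    have h2 := mul_mul_mul (F := F) z x y
    have h3 : (LinearMap.mul F A x * LinearMap.mul F A y -
        LinearMap.mul F A y * LinearMap.mul F A x) z = z * y * x - z * x * y := by
      simp [mul_comm]
    rw [h3, map_sub, h1, h2, mul_comm y x]
    noncomm_ring
  | zero => simp
  | add d e _ _ hd he =>
    rw [LinearMap.add_apply, map_add, ← hd, ← he]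
    noncomm_ring
  | smul c d _ hd =>
    rw [LinearMap.smul_apply, map_smul, ← hd, smul_mul_assoc, mul_smul_comm, smul_sub]

theorem innerDerivations_commutator_mem {d e : Module.End F A} (hd : d ∈ innerDerivations F A)
    (he : e ∈ innerDerivations F A) : d * e - e * d ∈ innerDerivations F A := by
  induction he using Submodule.span_induction with
  | mem e he =>
    obtain ⟨x, y, rfl⟩ := he
    have hx := innerDerivations_commutator_mul hd x
    have hy := innerDerivations_commutator_mul hd y
    have := add_mem (commutator_mul_mem_innerDerivations (F := F) (d x) y)
      (commutator_mul_mem_innerDerivations (F := F) x (d y))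
    rw [← hx, ← hy] at this
    convert this using 1
    noncomm_ring
  | zero => simp
  | add e f _ _ he hf =>
    convert add_mem he hf using 1
    noncomm_ring
  | smul c e _ he =>
    rw [mul_smul_comm, smul_mul_assoc, ← smul_sub]
    exact Submodule.smul_mem _ _ he

theorem trace_innerDerivations_mul_eq_zero (hnil : ∀ x : A, IsNilpotent (LinearMap.mul F A x))
    {d e : Module.End F A} (hd : d ∈ innerDerivations F A) (he : e ∈ innerDerivations F A) :
    LinearMap.trace F A (d * e) = 0 := by
  induction hd using Submodule.span_induction with
  | mem d hd =>
    obtain ⟨x, y, rfl⟩ := hd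
    have h := trace_mul_mul_eq_zero hnil x (e y)
    rw [← innerDerivations_commutator_mul he y, mul_sub, map_sub, ← mul_assoc, ← mul_assoc] at h
    rw [sub_mul, map_sub, mul_assoc (LinearMap.mul F A y), LinearMap.trace_mul_comm F
      (LinearMap.mul F A y)]
    linear_combination -h
  | zero => simp
  | add d f _ _ hd hf => rw [add_mul, map_add, hd, hf, add_zero]
  | smul c d _ hd => rw [smul_mul_assoc, map_smul, hd, smul_zero]

end Jordan

section DoubledLieAlgebra

attribute [local instance] LieRing.ofAssociativeRing

open LieAlgebra LieModule

/-- The Lie algebra of endomorphisms of `A × A` with antidiagonal blocks a multiplication operator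
and diagonal blocks an inner derivation. On it, the trace form has no mixed terms. -/
def doubledLieSubalgebra (F A : Type*) [Field F] [CharZero F] [NonUnitalNonAssocCommRing A]
    [Module F A] [SMulCommClass F A A] [IsScalarTower F A A] [IsCommJordan A] :
    LieSubalgebra F (Module.End F (A × A)) where
  carrier := {f | ∃ x : A, ∃ d ∈ innerDerivations F A,
    f = blockAnti (LinearMap.mul F A x) + blockDiag d}
  add_mem' := by
    rintro _ _ ⟨x, d, hd, rfl⟩ ⟨y, e, he, rfl⟩
    refine ⟨x + y, d + e, add_mem hd he, LinearMap.ext fun p => ?_⟩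
    refine Prod.ext ?_ ?_ <;> simp <;> abel
  zero_mem' := ⟨0, 0, zero_mem _, LinearMap.ext fun p => Prod.ext (by simp) (by simp)⟩
  smul_mem' := by
    rintro c _ ⟨x, d, hd, rfl⟩
    exact ⟨c • x, c • d, Submodule.smul_mem _ c hd, LinearMap.ext fun p => by simp⟩
  lie_mem' := by
    rintro _ _ ⟨x, d, hd, rfl⟩ ⟨y, e, he, rfl⟩
    refine ⟨d y - e x, (LinearMap.mul F A x * LinearMap.mul F A y -
      LinearMap.mul F A y * LinearMap.mul F A x) + (d * e - e * d),
      add_mem (commutator_mul_mem_innerDerivations x y) (innerDerivations_commutator_mem hd he), ?_⟩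
    rw [map_sub, ← innerDerivations_commutator_mul hd, ← innerDerivations_commutator_mul he]
    refine LinearMap.ext fun p => ?_
    refine Prod.ext ?_ ?_ <;> simp [Ring.lie_def, mul_add] <;> abel

variable {F A : Type*} [Field F] [CharZero F] [NonUnitalNonAssocCommRing A]
  [Module F A] [SMulCommClass F A A] [IsScalarTower F A A] [IsCommJordan A]

theorem blockAnti_mul_mem_doubledLieSubalgebra (x : A) :
    blockAnti (LinearMap.mul F A x) ∈ doubledLieSubalgebra F A :=
  ⟨x, 0, zero_mem _, LinearMap.ext fun p => by simp⟩

theorem blockDiag_mem_doubledLieSubalgebra {d : Module.End F A} (hd : d ∈ innerDerivations F A) :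
    blockDiag d ∈ doubledLieSubalgebra F A :=
  ⟨0, d, hd, LinearMap.ext fun p => by simp⟩

theorem blockDiag_mem_derivedSeries {d : Module.End F A} (hd : d ∈ innerDerivations F A) :
    (⟨blockDiag d, blockDiag_mem_doubledLieSubalgebra hd⟩ : doubledLieSubalgebra F A) ∈
      derivedSeries F (doubledLieSubalgebra F A) 1 := by
  induction hd using Submodule.span_induction with
  | mem d hd =>
    obtain ⟨x, y, rfl⟩ := hd
    have h : ⁅(⟨_, blockAnti_mul_mem_doubledLieSubalgebra x⟩ : doubledLieSubalgebra F A),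
        (⟨_, blockAnti_mul_mem_doubledLieSubalgebra y⟩ : doubledLieSubalgebra F A)⁆ ∈
        derivedSeries F (doubledLieSubalgebra F A) 1 := by
      rw [derivedSeries_def, derivedSeriesOfIdeal_succ]
      exact LieSubmodule.lie_mem_lie (LieSubmodule.mem_top _) (LieSubmodule.mem_top _)
    exact h
  | zero => exact zero_mem (derivedSeries F (doubledLieSubalgebra F A) 1)
  | add d e _ _ hd he => exact add_mem hd he
  | smul c d _ hd => exact (derivedSeries F (doubledLieSubalgebra F A) 1).smul_mem c hd

variable [FiniteDimensional F A]

theorem traceForm_doubledLieSubalgebra_eq_zero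
    (hnil : ∀ x : A, IsNilpotent (LinearMap.mul F A x)) :
    traceForm F (doubledLieSubalgebra F A) (A × A) = 0 := by
  ext ⟨_, x, d, hd, rfl⟩ ⟨_, y, e, he, rfl⟩
  rw [traceForm_apply_apply]
  change LinearMap.trace F (A × A) ((blockAnti (LinearMap.mul F A x) + blockDiag d) *
    (blockAnti (LinearMap.mul F A y) + blockDiag e)) = 0
  rw [add_mul, mul_add, mul_add, blockAnti_mul_blockAnti, blockAnti_mul_blockDiag,
    blockDiag_mul_blockAnti, blockDiag_mul_blockDiag]
  simp only [map_add, trace_blockAnti, trace_blockDiag, trace_mul_mul_eq_zero hnil,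
    trace_innerDerivations_mul_eq_zero hnil hd he, mul_zero, add_zero]

/-- A finite-dimensional Jordan algebra in characteristic zero with nilpotent multiplications has a
nilpotent multiplication algebra. -/
theorem isNilpotent_doubledLieSubalgebra (hnil : ∀ x : A, IsNilpotent (LinearMap.mul F A x)) :
    LieModule.IsNilpotent (doubledLieSubalgebra F A) (A × A) := by
  refine isNilpotent_of_traceForm_eq_zero (traceForm_doubledLieSubalgebra_eq_zero hnil) ?_
  rintro ⟨_, x, d, hd, rfl⟩
  refine ⟨_, blockDiag_mem_derivedSeries hd, ?_⟩
  have h : toEnd F (doubledLieSubalgebra F A) (A × A)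
      (⟨blockAnti (LinearMap.mul F A x) + blockDiag d, x, d, hd, rfl⟩ -
        ⟨blockDiag d, blockDiag_mem_doubledLieSubalgebra hd⟩) =
      blockAnti (LinearMap.mul F A x) := by
    change blockAnti (LinearMap.mul F A x) + blockDiag d - blockDiag d = _
    rw [add_sub_cancel_right]
  rw [h]
  exact (hnil x).blockAnti

/-- Nilpotent multiplications lower a finite chain of subspaces from the whole space to zero. -/
theorem exists_chain_of_isNilpotent_mul (hnil : ∀ x : A, IsNilpotent (LinearMap.mul F A x)) :
    ∃ N : ℕ → Submodule F A, N 0 = ⊤ ∧ (∀ i, ∀ x : A, ∀ y ∈ N i, x * y ∈ N (i + 1)) ∧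
      ∃ k, N k = ⊥ := by
  obtain ⟨k, hk⟩ := (LieModule.isNilpotent_iff F _ _).1 (isNilpotent_doubledLieSubalgebra hnil)
  let W : ℕ → Submodule F (A × A) := fun i =>
    (lowerCentralSeries F (doubledLieSubalgebra F A) (A × A) i).toSubmodule
  have hW : ∀ i, ∀ x : A, ∀ p ∈ W i, blockAnti (LinearMap.mul F A x) p ∈ W (i + 1) := by
    intro i x p hp
    change ⁅(⟨_, blockAnti_mul_mem_doubledLieSubalgebra x⟩ : doubledLieSubalgebra F A), p⁆ ∈
      lowerCentralSeries F (doubledLieSubalgebra F A) (A × A) (i + 1)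
    rw [lowerCentralSeries_succ]
    exact LieSubmodule.lie_mem_lie (LieSubmodule.mem_top _) hp
  refine ⟨fun i => (W i).comap (LinearMap.inl F A A) ⊓ (W i).comap (LinearMap.inr F A A),
    ?_, ?_, k, ?_⟩
  · simp [W]
  · rintro i x y ⟨hl, hr⟩
    refine ⟨?_, ?_⟩
    · simpa using hW i x _ hr
    · simpa using hW i x _ hl
  · rw [eq_bot_iff]
    rintro y ⟨hl, -⟩
    simpa [W, hk] using hl

end DoubledLieAlgebra

/-- The trace of every multiplication vanishes in the presence of a surjective derivation. -/
theorem trace_mul_eq_zero_of_surjective_derivation {F A : Type*} [Field F]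
    [NonUnitalNonAssocCommRing A] [Module F A] [SMulCommClass F A A] [IsScalarTower F A A]
    (D : A →ₗ[F] A) (hD : Function.Surjective D)
    (hder : ∀ x y : A, D (x * y) = D x * y + x * D y) (x : A) :
    LinearMap.trace F A (LinearMap.mul F A x) = 0 := by
  obtain ⟨y, rfl⟩ := hD x
  have h : LinearMap.mul F A (D y) =
      (D : Module.End F A) * LinearMap.mul F A y - LinearMap.mul F A y * (D : Module.End F A) := by
    ext z
    simp [hder]
  rw [h, map_sub, LinearMap.trace_mul_comm, sub_self]

/-- Products of at least `2 ^ i` factors lie in the `i`-th term of any chain of subspaces lowered by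
all multiplications. -/
theorem nser_le_of_chain {F A : Type*} [Field F] [NonUnitalNonAssocCommRing A] [Module F A]
    (N : ℕ → Submodule F A) (h0 : N 0 = ⊤)
    (hN : ∀ i, ∀ x : A, ∀ y ∈ N i, x * y ∈ N (i + 1)) (i n : ℕ) (hn : 2 ^ i ≤ n + 1) :
    nser F A n ≤ N i := by
  induction i generalizing n with
  | zero => simp [h0]
  | succ i ih =>
    rw [pow_succ] at hn
    obtain _ | n := n
    · have := Nat.one_le_two_pow (n := i)
      omega
    rw [nser]
    refine iSup_le fun p => Submodule.span_le.2 ?_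
    rintro _ ⟨x, hx, y, hy, rfl⟩
    have hp := p.isLt
    by_cases h : 2 ^ i ≤ p.1 + 1
    · rw [mul_comm]
      exact hN i y x (ih _ h hx)
    · exact hN i x y (ih _ (by omega) hy)

/-- a Jordan algebra admitting a bijective derivation is nilpotent. -/
theorem nilpotent_of_bijective_derivation
    {K : Type*} [Field K] [CharZero K]
    {J : Type*} [NonUnitalNonAssocCommRing J] [Module K J]
    [SMulCommClass K J J] [IsScalarTower K J J] [FiniteDimensional K J]
    (hjordan : ∀ x y : J, (x * y) * (x * x) = x * (y * (x * x)))
    (D : J →ₗ[K] J) (hbij : Function.Bijective D)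
    (hder : ∀ x y : J, D (x * y) = D x * y + x * D y) :
    ∃ n : ℕ, nser K J n = ⊥ := by
  have : IsCommJordan J := ⟨hjordan⟩
  have hnil := isNilpotent_mul_of_trace_eq_zero
    (trace_mul_eq_zero_of_surjective_derivation D hbij.surjective hder)
  obtain ⟨N, h0, hN, k, hk⟩ := exists_chain_of_isNilpotent_mul hnil
  refine ⟨2 ^ k, ?_⟩
  rw [eq_bot_iff, ← hk]
  exact nser_le_of_chain N h0 hN k _ (Nat.le_succ _)
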